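/- The ring O_{K^♭} has characteristic p, the p-power Frobenius map x ↦ x^p on O_{K^♭} is bijective (i.e., O_{K^♭} is a perfect ring), and O_{K^♭} is complete with respect to the metric d(α, β) := |α − β|_♭, where |α|_♭ := |α^♯|. -/

import Mathlib

/-!
Write `c = ‖ϖ‖ < 1`. Everything about the metric follows from one comparison between the flat
norm and the coordinates: for `α` in the tilt, `α i = 0 ↔ |α|_♭ ≤ c ^ q ^ i`
(`flatNorm_le_iff`). Hence the topology of `|·|_♭` is that of coordinatewise convergence in
discrete spaces: the coordinates of a Cauchy sequence are eventually constant, their eventual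
values form an element of the tilt, and this element is the limit.

For the comparison, choose lifts `a j` of `α j`. Since `a (i + j) ^ q ^ j ≡ a i` modulo `ϖ`, the
number `‖a (i + j) ^ q ^ (i + j)‖` is at most `c ^ q ^ i` if `‖a i‖ ≤ c`, and otherwise equals
`‖a i‖ ^ q ^ i` by the ultrametric inequality; then let `j → ∞`. The limit exists because raising
to the `p`-th power improves a congruence by a factor of norm `c` (`norm_pow_prime_sub_le`).

The characteristic is read off coordinatewise, and the inverse of the `p`-power map is
`α ↦ (α (i + 1) ^ p ^ (f - 1))_i`.
-/

set_option synthInstance.maxHeartbeats 1000000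
set_option maxHeartbeats 1000000

open Filter Topology

noncomputable section

/-- The valuation ring `O_K = {x : K | ‖x‖ ≤ 1}` of a nonarchimedean normed field. -/
def valRing (K : Type*) [NormedField K]
    (hna : IsNonarchimedean fun x : K => ‖x‖) : Subring K where
  carrier := {x : K | ‖x‖ ≤ 1}
  mul_mem' := by
    intro a b ha hb
    simp only [Set.mem_setOf_eq, norm_mul] at *
    exact mul_le_one₀ ha (norm_nonneg b) hb
  one_mem' := by simp
  add_mem' := by
    intro a b ha hb
    exact le_trans (hna a b) (max_le ha hb)
  zero_mem' := by simp
  neg_mem' := by intro a ha; simpa using ha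

/-- The tilt `O_{K^♭} = lim_{x ↦ x^q} R` of a ring `R` of characteristic `p`,
`q = p^f`: sequences `α` with `α (i+1) ^ q = α i`, a subring of `ℕ → R`. -/
def tiltSubring (R : Type*) [CommRing R] (p q f : ℕ) (hp : p.Prime)
    (hchar : CharP R p) (hq : q = p ^ f) : Subring (ℕ → R) where
  carrier := {α : ℕ → R | ∀ i, α (i + 1) ^ q = α i}
  mul_mem' := by
    intro a b ha hb i
    rw [Pi.mul_apply, Pi.mul_apply, mul_pow, ha i, hb i]
  one_mem' := by
    intro i
    rw [Pi.one_apply, Pi.one_apply, one_pow]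
  add_mem' := by
    intro a b ha hb i
    haveI := hchar
    haveI : ExpChar R p := ExpChar.prime hp
    subst hq
    rw [Pi.add_apply, Pi.add_apply, add_pow_expChar_pow, ha i, hb i]
  zero_mem' := by
    intro i
    rw [Pi.zero_apply, Pi.zero_apply, zero_pow (by subst hq; exact pow_ne_zero _ hp.ne_zero)]
  neg_mem' := by
    intro a ha i
    haveI := hchar
    haveI : ExpChar R p := ExpChar.prime hp
    subst hq
    rw [Pi.neg_apply, Pi.neg_apply, neg_eq_neg_one_mul, mul_pow, neg_one_pow_expChar_pow,
      neg_one_mul, ha i]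

/-- The sharp map `α ↦ α^♯`: the limit in `K` of `a_i ^ (q^i)` where `a_i` is a lift
of `α_i` to `O_K`. -/
def sharpFn {K : Type*} [NormedField K] (hna : IsNonarchimedean fun x : K => ‖x‖)
    (ϖ : valRing K hna) (q : ℕ)
    (α : ℕ → valRing K hna ⧸ Ideal.span {ϖ}) : K :=
  limUnder atTop fun i =>
    ((Function.surjInv Ideal.Quotient.mk_surjective (α i) : valRing K hna) : K) ^ q ^ i

/-- The function `|·|_♭` on the tilt: `|α|_♭ = |α^♯|`. -/
def flatNorm {K : Type*} [NormedField K] (hna : IsNonarchimedean fun x : K => ‖x‖)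
    (ϖ : valRing K hna) (q : ℕ)
    (α : ℕ → valRing K hna ⧸ Ideal.span {ϖ}) : ℝ :=
  ‖sharpFn hna ϖ q α‖

section Valuation

variable {K : Type*} [NormedField K] {hna : IsNonarchimedean fun x : K => ‖x‖}

/-- Divisibility in the valuation ring is comparison of norms. -/
lemma mem_span_iff_norm_le {ϖ : valRing K hna} (h0 : (ϖ : K) ≠ 0) (x : valRing K hna) :
    x ∈ Ideal.span {ϖ} ↔ ‖(x : K)‖ ≤ ‖(ϖ : K)‖ := by
  rw [Ideal.mem_span_singleton]
  constructor
  · rintro ⟨y, rfl⟩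
    have hy : ‖(y : K)‖ ≤ 1 := y.2
    simpa using mul_le_of_le_one_right (norm_nonneg (ϖ : K)) hy
  · intro h
    have hy : ‖(x : K) / ϖ‖ ≤ 1 := by
      rw [norm_div]
      exact div_le_one_of_le₀ h (norm_nonneg _)
    refine ⟨⟨(x : K) / ϖ, hy⟩, Subtype.ext ?_⟩
    simp [mul_div_cancel₀, h0]

lemma mk_eq_mk_iff_norm_le {ϖ : valRing K hna} (h0 : (ϖ : K) ≠ 0) (x y : valRing K hna) :
    Ideal.Quotient.mk (Ideal.span {ϖ}) x = Ideal.Quotient.mk (Ideal.span {ϖ}) y ↔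
      ‖(x : K) - y‖ ≤ ‖(ϖ : K)‖ := by
  rw [Ideal.Quotient.eq, mem_span_iff_norm_le h0]
  simp

/-- One `p`-th power sharpens a congruence by a factor of norm `c`: with `x = y + δ`, the
binomial theorem gives `x ^ p - y ^ p = δ ^ p + p y δ r` with `r` integral. -/
lemma norm_pow_prime_sub_le {p : ℕ} (hp : p.Prime) {c d : ℝ} (hpc : ‖(p : K)‖ ≤ c)
    (hdc : d ≤ c) (hc : c ≤ 1) (x y : valRing K hna) (h : ‖(x : K) - y‖ ≤ d) :
    ‖((x ^ p : valRing K hna) : K) - (y ^ p : valRing K hna)‖ ≤ c * d := by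
  have hd : 0 ≤ d := (norm_nonneg _).trans h
  obtain ⟨r, hr⟩ := exists_add_pow_prime_eq hp y (x - y)
  rw [add_sub_cancel] at hr
  have hy : ‖(y : K)‖ ≤ 1 := y.2
  have hr1 : ‖(r : K)‖ ≤ 1 := r.2
  have e : ((x ^ p : valRing K hna) : K) - (y ^ p : valRing K hna)
      = ((x : K) - y) ^ p + (p : K) * y * (x - y) * r := by
    rw [hr]; push_cast; ring
  rw [e]
  refine (hna _ _).trans (max_le ?_ ?_)
  · change ‖((x : K) - y) ^ p‖ ≤ c * d
    rw [norm_pow]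
    calc ‖(x : K) - y‖ ^ p ≤ ‖(x : K) - y‖ ^ 2 :=
          pow_le_pow_of_le_one (norm_nonneg _) (h.trans (hdc.trans hc)) hp.two_le
      _ = ‖(x : K) - y‖ * ‖(x : K) - y‖ := sq _
      _ ≤ c * d := mul_le_mul (h.trans hdc) h (norm_nonneg _) (hd.trans hdc)
  · change ‖(p : K) * y * ((x : K) - y) * r‖ ≤ c * d
    simp only [norm_mul]
    calc ‖(p : K)‖ * ‖(y : K)‖ * ‖(x : K) - y‖ * ‖(r : K)‖ ≤ c * 1 * d * 1 := by
          have : 0 ≤ c := hd.trans hdc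
          gcongr
      _ = c * d := by ring

lemma norm_pow_prime_pow_sub_le {p : ℕ} (hp : p.Prime) {c : ℝ} (hpc : ‖(p : K)‖ ≤ c)
    (hc : c ≤ 1) (x y : valRing K hna) (h : ‖(x : K) - y‖ ≤ c) (n : ℕ) :
    ‖(x : K) ^ p ^ n - (y : K) ^ p ^ n‖ ≤ c ^ (n + 1) := by
  have hc0 : 0 ≤ c := (norm_nonneg _).trans h
  induction n with
  | zero => simpa using h
  | succ n ih =>
    have := norm_pow_prime_sub_le hp hpc (d := c ^ (n + 1))
      (pow_le_of_le_one hc0 hc n.succ_ne_zero) hc (x ^ p ^ n) (y ^ p ^ n)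
      (by simpa using ih)
    rw [pow_succ p, pow_mul, pow_mul, pow_succ' c (n + 1)]
    simpa using this

end Valuation

section Sharp

variable {K : Type*} [NormedField K] {hna : IsNonarchimedean fun x : K => ‖x‖}

/-- The lift of `α i` to the valuation ring chosen in the definition of `sharpFn`. -/
def tiltLift {ϖ : valRing K hna} (α : ℕ → valRing K hna ⧸ Ideal.span {ϖ}) (i : ℕ) :
    valRing K hna :=
  Function.surjInv Ideal.Quotient.mk_surjective (α i)

lemma mk_tiltLift {ϖ : valRing K hna} (α : ℕ → valRing K hna ⧸ Ideal.span {ϖ}) (i : ℕ) :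
    Ideal.Quotient.mk (Ideal.span {ϖ}) (tiltLift α i) = α i :=
  Function.surjInv_eq _ _

lemma coord_eq_zero_iff {ϖ : valRing K hna} (h0 : (ϖ : K) ≠ 0)
    (α : ℕ → valRing K hna ⧸ Ideal.span {ϖ}) (i : ℕ) :
    α i = 0 ↔ ‖(tiltLift α i : K)‖ ≤ ‖(ϖ : K)‖ := by
  rw [← mem_span_iff_norm_le h0, ← Ideal.Quotient.eq_zero_iff_mem, mk_tiltLift]

lemma coord_add_pow {R : Type*} [CommRing R] {q : ℕ} {α : ℕ → R}
    (hα : ∀ i, α (i + 1) ^ q = α i) (i j : ℕ) : α (i + j) ^ q ^ j = α i := by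
  induction j with
  | zero => simp
  | succ j ih => rw [pow_succ', pow_mul, ← add_assoc, hα, ih]

lemma norm_tiltLift_pow_sub_le {ϖ : valRing K hna} (h0 : (ϖ : K) ≠ 0) {q : ℕ}
    {α : ℕ → valRing K hna ⧸ Ideal.span {ϖ}} (hα : ∀ i, α (i + 1) ^ q = α i) (i j : ℕ) :
    ‖(tiltLift α (i + j) : K) ^ q ^ j - tiltLift α i‖ ≤ ‖(ϖ : K)‖ := by
  have := (mk_eq_mk_iff_norm_le h0 (tiltLift α (i + j) ^ q ^ j) (tiltLift α i)).1 (by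
    rw [map_pow, mk_tiltLift, mk_tiltLift, coord_add_pow hα])
  simpa using this

/-- The sequence defining `α^♯` converges, so `sharpFn` is a genuine limit on the tilt. -/
lemma tendsto_sharpFn [CompleteSpace K] {ϖ : valRing K hna} (h0 : (ϖ : K) ≠ 0)
    (h1 : ‖(ϖ : K)‖ < 1) {p f q : ℕ} (hp : p.Prime) (hf : 0 < f) (hq : q = p ^ f)
    (hpc : ‖(p : K)‖ ≤ ‖(ϖ : K)‖)
    {α : ℕ → valRing K hna ⧸ Ideal.span {ϖ}} (hα : ∀ i, α (i + 1) ^ q = α i) :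
    Tendsto (fun i => (tiltLift α i : K) ^ q ^ i) atTop (𝓝 (sharpFn hna ϖ q α)) := by
  have hcau : CauchySeq fun i => (tiltLift α i : K) ^ q ^ i := by
    refine cauchySeq_of_le_geometric ‖(ϖ : K)‖ 1 h1 fun i => ?_
    rw [dist_comm, dist_eq_norm, one_mul]
    have h := norm_pow_prime_pow_sub_le hp hpc h1.le (tiltLift α (i + 1) ^ q) (tiltLift α i)
      (by simpa using norm_tiltLift_pow_sub_le h0 hα i 1) (f * i)
    rw [pow_mul p, ← hq] at h
    rw [pow_succ' q, pow_mul]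
    refine le_trans (by simpa using h) (pow_le_pow_of_le_one (norm_nonneg _) h1.le ?_)
    exact (Nat.le_mul_of_pos_left i hf).trans (Nat.le_succ _)
  exact CauchySeq.tendsto_limUnder hcau

/-- The flat norm detects the vanishing of coordinates. -/
lemma flatNorm_le_iff [CompleteSpace K] {ϖ : valRing K hna} (h0 : (ϖ : K) ≠ 0)
    (h1 : ‖(ϖ : K)‖ < 1) {p f q : ℕ} (hp : p.Prime) (hf : 0 < f) (hq : q = p ^ f)
    (hpc : ‖(p : K)‖ ≤ ‖(ϖ : K)‖)
    {α : ℕ → valRing K hna ⧸ Ideal.span {ϖ}} (hα : ∀ i, α (i + 1) ^ q = α i) (i : ℕ) :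
    α i = 0 ↔ flatNorm hna ϖ q α ≤ ‖(ϖ : K)‖ ^ q ^ i := by
  have hqi : q ^ i ≠ 0 := pow_ne_zero _ (hq ▸ pow_ne_zero _ hp.ne_zero)
  have hlim : Tendsto (fun j => ‖(tiltLift α (i + j) : K) ^ q ^ j‖ ^ q ^ i) atTop
      (𝓝 (flatNorm hna ϖ q α)) := by
    have h := ((tendsto_add_atTop_iff_nat i).2
      (tendsto_sharpFn h0 h1 hp hf hq hpc hα)).norm
    refine h.congr fun j => ?_
    rw [add_comm j i, pow_add q, mul_comm (q ^ i), pow_mul, norm_pow _ (q ^ i)]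
  have hcong := norm_tiltLift_pow_sub_le h0 hα i
  rw [coord_eq_zero_iff h0]
  constructor
  · intro hi
    refine le_of_tendsto' hlim fun j => ?_
    gcongr
    have : ‖_‖ ≤ max ‖_‖ ‖_‖ := hna ((tiltLift α (i + j) : K) ^ q ^ j - tiltLift α i) (tiltLift α i)
    rw [sub_add_cancel] at this
    exact this.trans (max_le (hcong j) hi)
  · contrapose!
    intro hi
    -- the ultrametric inequality bounds the norms of all the terms below by that of `a i`
    have hge : ‖(tiltLift α i : K)‖ ^ q ^ i ≤ flatNorm hna ϖ q α := by
      refine ge_of_tendsto' hlim fun j => ?_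
      gcongr
      have : ‖_‖ ≤ max ‖_‖ ‖_‖ := hna ((tiltLift α i : K) - (tiltLift α (i + j) : K) ^ q ^ j)
        ((tiltLift α (i + j) : K) ^ q ^ j)
      rw [sub_add_cancel, norm_sub_rev] at this
      exact (le_max_iff.1 this).resolve_left (not_le.2 ((hcong j).trans_lt hi))
    exact (pow_lt_pow_left₀ hi (norm_nonneg _) hqi).trans_le hge

end Sharp

/-- **The tilt is a perfect complete ring of characteristic `p`.**  `O_{K^♭}` has
characteristic `p`, the `p`-power Frobenius `x ↦ x^p` on it is bijective, and it is
complete with respect to the metric `d(α, β) = |α − β|_♭`, where `|α|_♭ = |α^♯|`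
(completeness is expressed as: every Cauchy sequence converges). -/
theorem tilt_charP_perfect_complete
    (p : ℕ) [Fact p.Prime] (K : Type*) [NormedField K] [CompleteSpace K]
    [Algebra ℚ_[p] K]
    (hna : IsNonarchimedean fun x : K => ‖x‖)
    (hext : ∀ c : ℚ_[p], ‖algebraMap ℚ_[p] K c‖ = ‖c‖)
    (q f : ℕ) (hf : 0 < f) (hq : q = p ^ f)
    (ϖ : valRing K hna) (hϖp : ‖(p : K)‖ ≤ ‖(ϖ : K)‖) (hϖ1 : ‖(ϖ : K)‖ < 1)
    (hchar : CharP (valRing K hna ⧸ Ideal.span {ϖ}) p) :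
    CharP (tiltSubring (valRing K hna ⧸ Ideal.span {ϖ}) p q f Fact.out hchar hq) p ∧
    Function.Bijective
      (fun x : tiltSubring (valRing K hna ⧸ Ideal.span {ϖ}) p q f Fact.out hchar hq =>
        x ^ p) ∧
    (∀ u : ℕ → tiltSubring (valRing K hna ⧸ Ideal.span {ϖ}) p q f Fact.out hchar hq,
      (∀ ε : ℝ, 0 < ε → ∃ N : ℕ, ∀ m ≥ N, ∀ n ≥ N,
        flatNorm hna ϖ q ((u m - u n : _) : ℕ → _) < ε) →
      ∃ L : tiltSubring (valRing K hna ⧸ Ideal.span {ϖ}) p q f Fact.out hchar hq,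
        ∀ ε : ℝ, 0 < ε → ∃ N : ℕ, ∀ n ≥ N,
          flatNorm hna ϖ q ((u n - L : _) : ℕ → _) < ε) := by
  have hp : p.Prime := Fact.out
  have h0 : (ϖ : K) ≠ 0 := by
    have h := hext p
    rw [map_natCast] at h
    have : 0 < ‖(p : K)‖ := by
      rw [h, norm_pos_iff]
      exact_mod_cast hp.ne_zero
    exact norm_pos_iff.1 (this.trans_le hϖp)
  have hpf : p * p ^ (f - 1) = q := by
    rw [hq, ← pow_succ', Nat.sub_add_cancel hf]
  refine ⟨⟨fun n => ?_⟩, ⟨fun x y hxy => ?_, fun x => ?_⟩, fun u hu => ?_⟩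
  · rw [← CharP.cast_eq_zero_iff (valRing K hna ⧸ Ideal.span {ϖ}) p n]
    constructor
    · intro h
      simpa using congrFun (congrArg Subtype.val h) 0
    · intro h
      refine Subtype.ext (funext fun i => ?_)
      simpa using h
  · refine Subtype.ext (funext fun i => ?_)
    have h : x.1 (i + 1) ^ p = y.1 (i + 1) ^ p := congrFun (congrArg Subtype.val hxy) (i + 1)
    calc x.1 i = (x.1 (i + 1) ^ p) ^ p ^ (f - 1) := by rw [← pow_mul, hpf, x.2 i]
      _ = y.1 i := by rw [h, ← pow_mul, hpf, y.2 i]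
  · refine ⟨⟨fun i => x.1 (i + 1) ^ p ^ (f - 1), fun i => ?_⟩,
      Subtype.ext (funext fun i => ?_)⟩
    · rw [← pow_mul, mul_comm, pow_mul, x.2 (i + 1)]
    · change (x.1 (i + 1) ^ p ^ (f - 1)) ^ p = x.1 i
      rw [← pow_mul, mul_comm, hpf, x.2 i]
  · -- each coordinate of `u` is eventually constant
    have hconst : ∀ i, ∃ N, ∀ m ≥ N, ∀ n ≥ N, (u m).1 i = (u n).1 i := fun i => by
      obtain ⟨N, hN⟩ := hu (‖(ϖ : K)‖ ^ q ^ i) (pow_pos (norm_pos_iff.2 h0) _)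
      refine ⟨N, fun m hm n hn => sub_eq_zero.1 ?_⟩
      exact (flatNorm_le_iff h0 hϖ1 hp hf hq hϖp (u m - u n).2 i).2 (hN m hm n hn).le
    choose N hN using hconst
    let L : tiltSubring (valRing K hna ⧸ Ideal.span {ϖ}) p q f Fact.out hchar hq :=
      ⟨fun i => (u (N i)).1 i, fun i => by
        change (u (N (i + 1))).1 (i + 1) ^ q = (u (N i)).1 i
        rw [hN (i + 1) _ le_rfl (max (N i) (N (i + 1))) (le_max_right _ _),
          hN i _ le_rfl (max (N i) (N (i + 1))) (le_max_left _ _)]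
        exact (u _).2 i⟩
    refine ⟨L, fun ε hε => ?_⟩
    obtain ⟨i, hi⟩ := exists_pow_lt_of_lt_one hε hϖ1
    have hq1 : 1 < q := hq ▸ Nat.one_lt_pow hf.ne' hp.one_lt
    refine ⟨N i, fun n hn => lt_of_le_of_lt ?_ hi⟩
    refine ((flatNorm_le_iff h0 hϖ1 hp hf hq hϖp (u n - L).2 i).1 ?_).trans
      (pow_le_pow_of_le_one (norm_nonneg _) hϖ1.le (Nat.lt_pow_self hq1).le)
    exact sub_eq_zero.2 (hN i n hn _ le_rfl)
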